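/- Let k ≥ 1, C ≥ 0, let x_1,…,x_k be positive reals and W = x_1 + ⋯ + x_k. Suppose that for every i ∈ {1,…,k}: | (k/W) Σ_{m=1}^{i} x_m − i | ≤ C √(2 i L(i)) and | (k/W) Σ_{m=k−i+1}^{k} x_m − i | ≤ C √(2 i L(i)), where L(i) = max(log log i, 1). Then for all 1 ≤ i < j ≤ k+1, | (k/W) Σ_{m=i}^{j−1} x_m − (j−i) | ≤ 2C √( 2 s L(s) ), where s = s(i,j,k) = max( min(i−1, k+1−i), min(j−1, k+1−j) ) (with the convention that the right-hand side is 0 when s = 0, in which case the left-hand side is 0 as well). -/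

import Mathlib

/-!
Let `D t = (k / W) * (x_1 + ⋯ + x_t) - t` be the discrepancy of the prefix of length `t`. Since
`D k = 0`, the discrepancy of the suffix of length `t` is `-D (k - t)`; hence legality gives
`|D t| ≤ C √(2 r L(r))` both for `r = t` and for `r = k - t`, that is, for `r = min t (k - t)`.
The discrepancy of the subpath from `i` to `j` is `D (j - 1) - D (i - 1)`, so the claim follows from
the triangle inequality and the monotonicity of `r ↦ √(2 r L(r))`, which replaces both
minima by their maximum `s(i,j,k)`.
-/

/-- `L(i) = max(log log i, 1)`. -/
noncomputable def LL (i : ℕ) : ℝ := max (Real.log (Real.log i)) 1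

/-- `s(i,j,k) = max(min(i−1, k+1−i), min(j−1, k+1−j))`. -/
def sjk (i j k : ℕ) : ℕ := max (min (i - 1) (k + 1 - i)) (min (j - 1) (k + 1 - j))

/-- Monotonicity survives the junk values of `log` at small arguments because the
maximum with `1` is attained there. -/
lemma LL_mono {a b : ℕ} (h : a ≤ b) : LL a ≤ LL b := by
  unfold LL
  rcases Nat.lt_or_ge a 2 with ha | ha
  · have h0 : Real.log (a : ℝ) = 0 := by interval_cases a <;> simp
    simp [h0]
  · have ha' : (1 : ℝ) < a := by exact_mod_cast ha
    have hab : (a : ℝ) ≤ b := by exact_mod_cast h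
    exact max_le_max_right _ (Real.log_le_log (Real.log_pos ha')
      (Real.log_le_log (by linarith) hab))

lemma sqrt_LL_mono {a b : ℕ} (h : a ≤ b) :
    Real.sqrt (2 * a * LL a) ≤ Real.sqrt (2 * b * LL b) := by
  have h1 : (0 : ℝ) ≤ LL a := zero_le_one.trans (le_max_right _ _)
  have h2 := LL_mono h
  gcongr

/-- If a path with positive edge weights `x_1,…,x_k` and total weight `W` is `C`-legal,
i.e. for every `i ∈ {1,…,k}` both `|(k/W) Σ_{m≤i} x_m − i| ≤ C √(2 i L(i))` and
`|(k/W) Σ_{m=k−i+1}^{k} x_m − i| ≤ C √(2 i L(i))`, then for all `1 ≤ i < j ≤ k+1`,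
`|(k/W) Σ_{m=i}^{j−1} x_m − (j−i)| ≤ 2C √(2 s L(s))` with `s = s(i,j,k)`. -/
theorem stmt17 (k : ℕ) (hk : 1 ≤ k) (C : ℝ) (hC : 0 ≤ C) (x : ℕ → ℝ)
    (hx : ∀ m ∈ Finset.Icc 1 k, 0 < x m)
    (hlegal : ∀ i ∈ Finset.Icc 1 k,
      |((k : ℝ) / (∑ m ∈ Finset.Icc 1 k, x m)) * (∑ m ∈ Finset.Icc 1 i, x m) -
          (i : ℝ)| ≤ C * Real.sqrt (2 * i * LL i) ∧
      |((k : ℝ) / (∑ m ∈ Finset.Icc 1 k, x m)) *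
            (∑ m ∈ Finset.Icc (k - i + 1) k, x m) - (i : ℝ)| ≤
        C * Real.sqrt (2 * i * LL i)) :
    ∀ i j : ℕ, 1 ≤ i → i < j → j ≤ k + 1 →
      |((k : ℝ) / (∑ m ∈ Finset.Icc 1 k, x m)) *
            (∑ m ∈ Finset.Icc i (j - 1), x m) - ((j : ℝ) - (i : ℝ))| ≤
        2 * C * Real.sqrt (2 * (sjk i j k : ℝ) * LL (sjk i j k)) := by
  set W := ∑ m ∈ Finset.Icc 1 k, x m with hW
  have hWpos : 0 < W := Finset.sum_pos hx ⟨1, by simp [hk]⟩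
  have hsplit : ∀ a b : ℕ, a ≤ b →
      ∑ m ∈ Finset.Icc (a + 1) b, x m =
        ∑ m ∈ Finset.Icc 1 b, x m - ∑ m ∈ Finset.Icc 1 a, x m := by
    intro a b hab
    induction b, hab using Nat.le_induction with
    | base => simp
    | succ n hn ih =>
      rw [Finset.sum_Icc_succ_top (by omega), Finset.sum_Icc_succ_top (by omega), ih]
      ring
  -- The discrepancy of a prefix is controlled by the distance to the nearer endpoint.
  have hD : ∀ t : ℕ, t ≤ k →
      |(k : ℝ) / W * (∑ m ∈ Finset.Icc 1 t, x m) - t| ≤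
        C * Real.sqrt (2 * (min t (k - t) : ℕ) * LL (min t (k - t))) := by
    intro t ht
    have hk' : (k : ℝ) / W * W = k := div_mul_cancel₀ _ hWpos.ne'
    rcases Nat.eq_zero_or_pos t with rfl | h0
    · simp
    rcases ht.eq_or_lt with rfl | hlt
    · rw [← hW, hk']
      simp
    rcases le_total t (k - t) with h | h
    · rw [min_eq_left h]
      exact (hlegal t (Finset.mem_Icc.mpr ⟨h0, ht⟩)).1
    · rw [min_eq_right h]
      have h2 := (hlegal (k - t) (Finset.mem_Icc.mpr ⟨by omega, by omega⟩)).2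
      rw [Nat.sub_sub_self ht, hsplit t k ht, ← hW, mul_sub, hk', abs_sub_comm] at h2
      convert h2 using 2
      push_cast [ht]
      ring
  intro i j hi hij hj
  obtain ⟨p, rfl⟩ : ∃ p, i = p + 1 := ⟨i - 1, by omega⟩
  obtain ⟨q, rfl⟩ : ∃ q, j = q + 1 := ⟨j - 1, by omega⟩
  have hs : sjk (p + 1) (q + 1) k = max (min p (k - p)) (min q (k - q)) := by
    simp [sjk]
  have hp := (hD p (by omega)).trans (mul_le_mul_of_nonneg_left
    (sqrt_LL_mono (hs ▸ le_max_left _ _ : _ ≤ sjk (p + 1) (q + 1) k)) hC)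
  have hq := (hD q (by omega)).trans (mul_le_mul_of_nonneg_left
    (sqrt_LL_mono (hs ▸ le_max_right _ _ : _ ≤ sjk (p + 1) (q + 1) k)) hC)
  rw [Nat.add_sub_cancel, hsplit p q (by omega), mul_sub]
  push_cast
  rw [abs_le] at hp hq ⊢
  constructor <;> linarith [hp.1, hp.2, hq.1, hq.2]
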